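/- (Core lower bound in the ill-posedness Theorem 4.1.) Let β ∈ {−1,1}, let s < −3 and let ε > 0 satisfy −2s − 6 − 2ε > 0. Let γ(ξ) = √(ξ² − βξ⁴ + ξ⁶), and for t > 0 and ξ, ξ₁ ∈ ℝ set K(t, ξ, ξ₁) = ∫₀ᵗ sin((t − t′)γ(ξ)) cos(t′γ(ξ − ξ₁)) cos(t′γ(ξ₁)) dt′. For N ≥ 1 and ξ ∈ ℝ let A_ξ^N = {ξ₁ ∈ ℝ : N + 1 ≤ ξ₁ ≤ N + 2 and −N ≤ ξ − ξ₁ ≤ −N + 1}, and set t_N = N^{−3−ε}. Then there exist c > 0 and N₀ ≥ 1 such that for all N ≥ N₀: ( ∫_{3/2}^{5/2} (1 + ξ²)^s ( ∫_{A_ξ^N} (ξ²/γ(ξ)) N^{−2s} K(t_N, ξ, ξ₁) dξ₁ )² dξ )^{1/2} ≥ c N^{−2s−6−2ε}. In particular, since −2s − 6 − 2ε > 0, this quantity tends to infinity as N → ∞. -/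

import Mathlib

/-!
At time `t = N ^ (-3 - ε)` every phase is small. All the frequencies involved are at most `3 N` in
absolute value, where `gam β ≤ 30 N ^ 3`, so each phase is at most `30 N ^ (-ε) ≤ 1` once
`N ≥ 30 ^ (1 / ε)`. Hence both cosines are at least `1 / 2`, the sine is at least half of its
argument, and `Kker β t ξ ξ₁ ≥ gam β ξ * t ^ 2 / 16` (`Kker_lower`). The factor `gam β ξ` cancels
the one in `ξ ^ 2 / gam β ξ`, and `Aset N ξ` is an interval of length at least `1 / 2` for
`3 / 2 ≤ ξ ≤ 5 / 2`. The inner integral is therefore at least a constant times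
`N ^ (-2 * s) * t ^ 2 = N ^ (-2 * s - 6 - 2 * ε)` (`inner_lower`).

Since a non-integrable function has integral zero, the outer integrand must also be shown to be
integrable: it is measurable, as an integral depending on a parameter, and bounded because
`gam β ≥ 1` on `[3 / 2, 5 / 2]` and `|Kker β t| ≤ t` (`outer_integrable`).
-/

open MeasureTheory

noncomputable def gam (β ξ : ℝ) : ℝ := Real.sqrt (ξ^2 - β*ξ^4 + ξ^6)

/-- The oscillatory kernel arising in the Duhamel term. -/
noncomputable def Kker (β t ξ ξ₁ : ℝ) : ℝ :=
  ∫ t' in (0:ℝ)..t,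
    Real.sin ((t - t') * gam β ξ) * Real.cos (t' * gam β (ξ - ξ₁)) *
      Real.cos (t' * gam β ξ₁)

/-- The frequency set `A_ξ^N`. -/
def Aset (N ξ : ℝ) : Set ℝ :=
  {ξ₁ | N + 1 ≤ ξ₁ ∧ ξ₁ ≤ N + 2 ∧ -N ≤ ξ - ξ₁ ∧ ξ - ξ₁ ≤ -N + 1}

lemma gam_continuous (β : ℝ) : Continuous (gam β) := by
  unfold gam
  fun_prop

lemma gam_nonneg (β ξ : ℝ) : 0 ≤ gam β ξ := Real.sqrt_nonneg _

lemma Kker_continuous (β t : ℝ) : Continuous fun p : ℝ × ℝ => Kker β t p.1 p.2 := by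
  unfold Kker
  have := gam_continuous β
  apply intervalIntegral.continuous_parametric_intervalIntegral_of_continuous'
  fun_prop

lemma Kker_abs_le (β t ξ ξ₁ : ℝ) (ht : 0 ≤ t) : |Kker β t ξ ξ₁| ≤ t := by
  have h := intervalIntegral.norm_integral_le_of_norm_le_const (a := 0) (b := t) (C := 1)
    (f := fun t' => Real.sin ((t - t') * gam β ξ) * Real.cos (t' * gam β (ξ - ξ₁)) *
      Real.cos (t' * gam β ξ₁)) (by
      intro x _
      rw [norm_mul, norm_mul]
      exact mul_le_one₀ (mul_le_one₀ (Real.abs_sin_le_one _) (norm_nonneg _)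
        (Real.abs_cos_le_one _)) (norm_nonneg _) (Real.abs_cos_le_one _))
  simpa [Kker, abs_of_nonneg ht] using h

lemma half_le_cos {x : ℝ} (h0 : 0 ≤ x) (h1 : x ≤ 1) : 1 / 2 ≤ Real.cos x := by
  have := Real.one_sub_sq_div_two_le_cos (x := x)
  nlinarith

lemma half_le_sin {x : ℝ} (h0 : 0 ≤ x) (h1 : x ≤ 1) : x / 2 ≤ Real.sin x := by
  rcases h0.eq_or_lt with rfl | h0
  · simp
  · have := Real.sin_gt_sub_cube h0
    nlinarith [mul_nonneg h0.le (mul_nonneg (sub_nonneg.2 h1) (by linarith : 0 ≤ 1 + x))]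

/-- When all phases stay in `[0, 1]`, the integrand is at least `(t - t') * gam β ξ / 8`. -/
lemma Kker_lower (β t ξ ξ₁ : ℝ) (ht : 0 ≤ t) (h1 : t * gam β ξ ≤ 1)
    (h2 : t * gam β (ξ - ξ₁) ≤ 1) (h3 : t * gam β ξ₁ ≤ 1) :
    gam β ξ * t ^ 2 / 16 ≤ Kker β t ξ ξ₁ := by
  have hc := gam_continuous β
  have hint : ∫ t' in (0:ℝ)..t, (t - t') * (gam β ξ / 8) = gam β ξ * t ^ 2 / 16 := by
    rw [intervalIntegral.integral_mul_const, intervalIntegral.integral_sub (by simp) (by simp)]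
    simp
    ring
  rw [← hint, Kker]
  apply intervalIntegral.integral_mono_on ht
  · exact Continuous.intervalIntegrable (by fun_prop) _ _
  · exact Continuous.intervalIntegrable (by fun_prop) _ _
  intro x ⟨hx0, hxt⟩
  have hg := gam_nonneg β ξ
  have phase : ∀ y, t * gam β y ≤ 1 → 1 / 2 ≤ Real.cos (x * gam β y) := fun y hy =>
    half_le_cos (mul_nonneg hx0 (gam_nonneg β y))
      ((mul_le_mul_of_nonneg_right hxt (gam_nonneg β y)).trans hy)
  have hs0 : 0 ≤ (t - x) * gam β ξ := mul_nonneg (by linarith) hg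
  have hs := half_le_sin hs0
    ((mul_le_mul_of_nonneg_right (by linarith : t - x ≤ t) hg).trans h1)
  calc (t - x) * (gam β ξ / 8) = ((t - x) * gam β ξ) / 2 * (1 / 2) * (1 / 2) := by ring
    _ ≤ _ := by
      have h2' := phase _ h2
      have h3' := phase _ h3
      have hsin := (div_nonneg hs0 zero_le_two).trans hs
      gcongr

lemma gam_le (β N x : ℝ) (hβ : β = 1 ∨ β = -1) (hN : 1 ≤ N) (hx : |x| ≤ 3 * N) :
    gam β x ≤ 30 * N ^ 3 := by
  apply Real.sqrt_le_iff.2 ⟨by positivity, ?_⟩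
  have h2 : x ^ 2 ≤ 9 * N ^ 2 := by
    rw [← sq_abs]
    nlinarith [abs_nonneg x]
  have h4 : x ^ 4 ≤ 81 * N ^ 4 := by
    calc x ^ 4 = (x ^ 2) ^ 2 := by ring
      _ ≤ (9 * N ^ 2) ^ 2 := by gcongr
      _ = _ := by ring
  have h6 : x ^ 6 ≤ 729 * N ^ 6 := by
    calc x ^ 6 = (x ^ 2) ^ 3 := by ring
      _ ≤ (9 * N ^ 2) ^ 3 := by gcongr
      _ = _ := by ring
  have hN2 : N ^ 2 ≤ N ^ 6 := pow_le_pow_right₀ hN (by norm_num)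
  have hN4 : N ^ 4 ≤ N ^ 6 := pow_le_pow_right₀ hN (by norm_num)
  have h0 : 0 ≤ x ^ 4 := by positivity
  have h06 : 0 ≤ N ^ 6 := by positivity
  have e : (30 * N ^ 3) ^ 2 = 900 * N ^ 6 := by ring
  rw [e]
  rcases hβ with rfl | rfl <;> linarith

lemma one_le_gam (β ξ : ℝ) (hβ : β = 1 ∨ β = -1) (hξ : 3 / 2 ≤ ξ) : 1 ≤ gam β ξ := by
  apply Real.one_le_sqrt.2
  have h2 : 1 ≤ ξ ^ 2 := by nlinarith
  have h4 : 0 ≤ ξ ^ 4 := by positivity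
  have h6 : ξ ^ 4 ≤ ξ ^ 6 := pow_le_pow_right₀ (by linarith) (by norm_num)
  rcases hβ with rfl | rfl <;> linarith

lemma Aset_eq_Icc (N ξ : ℝ) :
    Aset N ξ = Set.Icc (max (N + 1) (ξ + N - 1)) (min (N + 2) (ξ + N)) := by
  ext x
  simp only [Aset, Set.mem_ofPred_eq, Set.mem_Icc, max_le_iff, le_min_iff]
  constructor
  · rintro ⟨h1, h2, h3, h4⟩
    refine ⟨⟨?_, ?_⟩, ?_, ?_⟩ <;> linarith
  · rintro ⟨⟨h1, h2⟩, h3, h4⟩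
    refine ⟨?_, ?_, ?_, ?_⟩ <;> linarith

lemma volume_Aset_lower (N ξ : ℝ) (h1 : 3 / 2 ≤ ξ) (h2 : ξ ≤ 5 / 2) :
    1 / 2 ≤ volume.real (Aset N ξ) := by
  rw [Aset_eq_Icc, measureReal_def, Real.volume_Icc]
  refine le_trans ?_ (ENNReal.toReal_ofReal_eq_iff.2 ?_).ge
  all_goals
    rcases max_cases (N + 1) (ξ + N - 1) with h | h <;>
    rcases min_cases (N + 2) (ξ + N) with h' | h' <;> linarith

lemma volume_Aset_upper (N ξ : ℝ) : volume.real (Aset N ξ) ≤ 1 := by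
  rw [Aset_eq_Icc, measureReal_def, Real.volume_Icc]
  refine ENNReal.toReal_le_of_le_ofReal zero_le_one (ENNReal.ofReal_le_ofReal ?_)
  have := le_max_left (N + 1) (ξ + N - 1)
  have := min_le_left (N + 2) (ξ + N)
  linarith

lemma volume_Aset_lt_top (N ξ : ℝ) : volume (Aset N ξ) < ⊤ := by
  rw [Aset_eq_Icc]
  exact measure_Icc_lt_top

lemma measurableSet_Aset (N ξ : ℝ) : MeasurableSet (Aset N ξ) := by
  rw [Aset_eq_Icc]
  exact measurableSet_Icc

/-- `gam β ξ` cancels, leaving `ξ ^ 2 * M * t ^ 2 / 16` with `ξ ^ 2 ≥ 2`. Here `M` stands for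
`N ^ (-2 * s)`, and `htN` keeps all three phases in `[0, 1]`. -/
lemma integrand_lower (β N M t ξ ξ₁ : ℝ) (hβ : β = 1 ∨ β = -1) (hN : 1 ≤ N) (hM : 0 ≤ M)
    (ht : 0 ≤ t) (htN : t * (30 * N ^ 3) ≤ 1) (h1 : 3 / 2 ≤ ξ) (h2 : ξ ≤ 5 / 2)
    (hξ₁ : ξ₁ ∈ Aset N ξ) :
    M * t ^ 2 / 8 ≤ (ξ ^ 2 / gam β ξ) * M * Kker β t ξ ξ₁ := by
  obtain ⟨a1, a2, a3, a4⟩ := hξ₁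
  have hg := one_le_gam β ξ hβ h1
  have hg0 : gam β ξ ≠ 0 := by linarith
  have phase : ∀ y, |y| ≤ 3 * N → t * gam β y ≤ 1 := fun y hy =>
    (mul_le_mul_of_nonneg_left (gam_le β N y hβ hN hy) ht).trans htN
  have hK := Kker_lower β t ξ ξ₁ ht
    (phase _ (abs_le.2 ⟨by linarith, by linarith⟩))
    (phase _ (abs_le.2 ⟨by linarith, by linarith⟩))
    (phase _ (abs_le.2 ⟨by linarith, by linarith⟩))
  have hξ : 2 ≤ ξ ^ 2 := by nlinarith
  calc M * t ^ 2 / 8 = 2 * (M * t ^ 2 / 16) := by ring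
    _ ≤ ξ ^ 2 * (M * t ^ 2 / 16) := mul_le_mul_of_nonneg_right hξ (by positivity)
    _ = (ξ ^ 2 / gam β ξ) * M * (gam β ξ * t ^ 2 / 16) := by field_simp
    _ ≤ _ := mul_le_mul_of_nonneg_left hK (by positivity)

lemma inner_lower (β N M t ξ : ℝ) (hβ : β = 1 ∨ β = -1) (hN : 1 ≤ N) (hM : 0 ≤ M) (ht : 0 ≤ t)
    (htN : t * (30 * N ^ 3) ≤ 1) (h1 : 3 / 2 ≤ ξ) (h2 : ξ ≤ 5 / 2) :
    M * t ^ 2 / 16 ≤ ∫ ξ₁ in Aset N ξ, (ξ ^ 2 / gam β ξ) * M * Kker β t ξ ξ₁ := by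
  have hK : Continuous fun ξ₁ => Kker β t ξ ξ₁ :=
    Continuous.comp (g := fun p : ℝ × ℝ => Kker β t p.1 p.2) (f := fun y : ℝ => (ξ, y))
      (Kker_continuous β t) (Continuous.prodMk_right ξ)
  have hKc : Continuous fun ξ₁ => (ξ ^ 2 / gam β ξ) * M * Kker β t ξ ξ₁ := hK.const_mul _
  have hint : IntegrableOn (fun ξ₁ => (ξ ^ 2 / gam β ξ) * M * Kker β t ξ ξ₁) (Aset N ξ) := by
    rw [Aset_eq_Icc]
    exact hKc.continuousOn.integrableOn_Icc
  have hmono := setIntegral_mono_on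
    (integrableOn_const (C := M * t ^ 2 / 8) (volume_Aset_lt_top N ξ).ne) hint
    (measurableSet_Aset N ξ)
    fun ξ₁ hξ₁ => integrand_lower β N M t ξ ξ₁ hβ hN hM ht htN h1 h2 hξ₁
  rw [setIntegral_const, smul_eq_mul] at hmono
  calc M * t ^ 2 / 16 = 1 / 2 * (M * t ^ 2 / 8) := by ring
    _ ≤ volume.real (Aset N ξ) * (M * t ^ 2 / 8) :=
      mul_le_mul_of_nonneg_right (volume_Aset_lower N ξ h1 h2) (by positivity)
    _ ≤ _ := hmono

/-- The integral over the moving interval `Aset N ξ` is the partial integral of a measurable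
function on the plane, cut off to the closed set of pairs `(ξ, ξ₁)` with `ξ₁ ∈ Aset N ξ`. -/
lemma inner_measurable (β N M t : ℝ) :
    Measurable fun ξ => ∫ ξ₁ in Aset N ξ, (ξ ^ 2 / gam β ξ) * M * Kker β t ξ ξ₁ := by
  have hS : MeasurableSet {p : ℝ × ℝ | p.2 ∈ Aset N p.1} := by
    apply IsClosed.measurableSet
    simp only [Aset, Set.mem_ofPred_eq]
    refine IsClosed.and ?_ (IsClosed.and ?_ (IsClosed.and ?_ ?_)) <;>
      exact isClosed_le (by fun_prop) (by fun_prop)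
  have hf : Measurable fun p : ℝ × ℝ => (p.1 ^ 2 / gam β p.1) * M * Kker β t p.1 p.2 := by
    have h1 := (gam_continuous β).measurable
    have h2 := (Kker_continuous β t).measurable
    fun_prop
  have h := ((hf.indicator hS).stronglyMeasurable.integral_prod_right' (ν := volume)).measurable
  convert h using 2 with ξ
  rw [← integral_indicator (measurableSet_Aset N ξ)]
  rfl

lemma inner_abs_le (β N M t ξ : ℝ) (hβ : β = 1 ∨ β = -1) (hM : 0 ≤ M) (ht : 0 ≤ t)
    (h1 : 3 / 2 ≤ ξ) (h2 : ξ ≤ 5 / 2) :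
    |∫ ξ₁ in Aset N ξ, (ξ ^ 2 / gam β ξ) * M * Kker β t ξ ξ₁| ≤ 25 / 4 * M * t := by
  have hg := one_le_gam β ξ hβ h1
  have h := norm_setIntegral_le_of_norm_le_const (C := 25 / 4 * M * t)
    (f := fun ξ₁ => (ξ ^ 2 / gam β ξ) * M * Kker β t ξ ξ₁) (volume_Aset_lt_top N ξ) (by
      intro x _
      have hq : |ξ ^ 2 / gam β ξ| ≤ 25 / 4 := by
        rw [abs_of_nonneg (by positivity)]
        exact (div_le_self (by positivity) hg).trans (by nlinarith)
      rw [Real.norm_eq_abs, abs_mul, abs_mul, abs_of_nonneg hM]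
      gcongr
      exact Kker_abs_le β t ξ x ht)
  refine h.trans (mul_le_of_le_one_right (by positivity) (volume_Aset_upper N ξ))

lemma outer_integrable (β N M t s : ℝ) (hβ : β = 1 ∨ β = -1) (hM : 0 ≤ M) (ht : 0 ≤ t)
    (hs : s ≤ 0) :
    IntervalIntegrable (fun ξ => (1 + ξ ^ 2) ^ s *
      (∫ ξ₁ in Aset N ξ, (ξ ^ 2 / gam β ξ) * M * Kker β t ξ ξ₁) ^ 2) volume
      (3 / 2 : ℝ) (5 / 2 : ℝ) := by
  rw [intervalIntegrable_iff_integrableOn_Icc_of_le (by norm_num)]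
  refine Measure.integrableOn_of_bounded (M := (25 / 4 * M * t) ^ 2) measure_Icc_lt_top.ne ?_ ?_
  · have h1 := inner_measurable β N M t
    have h2 : Measurable fun ξ : ℝ => (1 + ξ ^ 2) ^ s := by fun_prop
    exact (h2.mul (h1.pow_const 2)).aestronglyMeasurable
  · refine (ae_restrict_iff' measurableSet_Icc).2 (.of_forall ?_)
    rintro ξ ⟨h1, h2⟩
    rw [Real.norm_eq_abs, abs_mul, abs_of_nonneg (by positivity), abs_pow]
    have hw : (1 + ξ ^ 2) ^ s ≤ 1 :=
      Real.rpow_le_one_of_one_le_of_nonpos (by nlinarith [sq_nonneg ξ]) hs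
    calc _ ≤ 1 * (25 / 4 * M * t) ^ 2 := by
          gcongr
          exact inner_abs_le β N M t ξ hβ hM ht h1 h2
      _ = _ := one_mul _

/-- Core lower bound in the ill-posedness Theorem 4.1: for `s < -3` and
suitable `ε > 0`, the `H^s`-type norm of the Duhamel term at time
`t_N = N^{-3-ε}` grows like `N^{-2s-6-2ε}`. -/
theorem illposedness_lower_bound (β : ℝ) (hβ : β = 1 ∨ β = -1) (s ε : ℝ)
    (hs : s < -3) (hε : 0 < ε) (hε2 : 0 < -2*s - 6 - 2*ε) :
    ∃ c > 0, ∃ N₀ : ℝ, 1 ≤ N₀ ∧ ∀ N : ℝ, N₀ ≤ N →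
      c * N ^ (-2*s - 6 - 2*ε) ≤
        (∫ ξ in (3/2 : ℝ)..(5/2 : ℝ),
          (1 + ξ^2) ^ s *
            (∫ ξ₁ in Aset N ξ,
              (ξ^2 / gam β ξ) * N ^ (-2*s) * Kker β (N ^ ((-3 : ℝ) - ε)) ξ ξ₁)^2) ^ ((1:ℝ)/2) := by
  have hs0 : s ≤ 0 := by linarith
  refine ⟨((29 / 4 : ℝ) ^ s) ^ ((1 : ℝ) / 2) / 16, by positivity,
    max 1 ((30 : ℝ) ^ (1 / ε)), le_max_left _ _, fun N hN => ?_⟩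
  have hN1 : 1 ≤ N := (le_max_left _ _).trans hN
  have hN30 : (30 : ℝ) ^ (1 / ε) ≤ N := (le_max_right _ _).trans hN
  have hN0 : 0 < N := by linarith
  set t := N ^ ((-3 : ℝ) - ε) with ht_def
  set M := N ^ (-2 * s) with hM_def
  have ht : 0 ≤ t := by positivity
  have hM : 0 ≤ M := by positivity
  have htN : t * (30 * N ^ 3) ≤ 1 := by
    have hε30 : 30 ≤ N ^ ε := by
      calc (30 : ℝ) = ((30 : ℝ) ^ (1 / ε)) ^ ε := by
            rw [← Real.rpow_mul (by norm_num), one_div_mul_cancel hε.ne', Real.rpow_one]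
        _ ≤ N ^ ε := by gcongr
    have e : t * N ^ 3 * N ^ ε = 1 := by
      rw [ht_def, ← Real.rpow_natCast, ← Real.rpow_add hN0, ← Real.rpow_add hN0]
      have : (-3 : ℝ) - ε + (3 : ℕ) + ε = 0 := by push_cast; ring
      rw [this, Real.rpow_zero]
    have h0 : 0 ≤ t * N ^ 3 := by positivity
    nlinarith
  have hpow : N ^ (-2 * s - 6 - 2 * ε) = M * t ^ 2 := by
    rw [hM_def, ht_def, ← Real.rpow_natCast, ← Real.rpow_mul hN0.le, ← Real.rpow_add hN0]
    congr 1
    push_cast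
    ring
  have hlow : (29 / 4 : ℝ) ^ s * (M * t ^ 2 / 16) ^ 2 ≤
      ∫ ξ in (3/2 : ℝ)..(5/2 : ℝ), (1 + ξ^2) ^ s *
        (∫ ξ₁ in Aset N ξ, (ξ^2 / gam β ξ) * M * Kker β t ξ ξ₁)^2 := by
    have hconst : ∫ _ in (3/2 : ℝ)..(5/2 : ℝ), (29 / 4 : ℝ) ^ s * (M * t ^ 2 / 16) ^ 2 =
        (29 / 4 : ℝ) ^ s * (M * t ^ 2 / 16) ^ 2 := by
      rw [intervalIntegral.integral_const, smul_eq_mul]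
      ring
    rw [← hconst]
    apply intervalIntegral.integral_mono_on (by norm_num) (by simp)
      (outer_integrable β N M t s hβ hM ht hs0)
    rintro ξ ⟨h1, h2⟩
    have hw : (29 / 4 : ℝ) ^ s ≤ (1 + ξ ^ 2) ^ s :=
      Real.rpow_le_rpow_of_nonpos (by positivity) (by nlinarith) hs0
    have hi := inner_lower β N M t ξ hβ hN1 hM ht htN h1 h2
    gcongr
  refine le_trans (le_of_eq ?_) (Real.rpow_le_rpow (by positivity) hlow (by norm_num))
  rw [Real.mul_rpow (by positivity) (by positivity), hpow, ← Real.sqrt_eq_rpow (_ ^ 2),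
    Real.sqrt_sq (by positivity)]
  ring
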